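/- arXiv:math/0607685 — 2 statements merged into one kernel-verified Lean document; each statement's English description precedes it below -/
import Mathlib

section
/- Let u : ℝ^m → ℂ be continuously differentiable, let x ∈ ℝ^m, and let ε > 0. Then |u(x)|² ≤ 2|u(φ(ε, x))|² + 2ε ∫_0^ε |(Du)(φ(t, x))[Z(φ(t, x))]|² dt, where (Du)(y)[v] denotes the Fréchet derivative of u at y applied to the vector v. (This is the pointwise transport estimate: the value of u at x is controlled by its value at the endpoint of the flow line together with the derivative of u along the flow line.) -/
open MeasureTheory

/-!
By the fundamental theorem of calculus, the increment of `u` along the flow line is at most the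
integral of the speed `‖Du(Z)‖` over a time interval of length `ε`. Jensen's inequality bounds the
`p`-th power of this integral by `ε ^ (p - 1) * ∫ ‖Du(Z)‖ ^ p`, and convexity of `x ↦ x ^ p` gives
`(x + y) ^ p ≤ 2 ^ (p - 1) * (x ^ p + y ^ p)`. The theorem is the case `p = 2`.
-/

theorem norm_rpow_le_two_rpow_mul_norm_rpow_add_norm_sub_rpow {F : Type*}
    [SeminormedAddCommGroup F] {p : ℝ} (hp : 1 ≤ p) (x y : F) :
    ‖x‖ ^ p ≤ 2 ^ (p - 1) * (‖y‖ ^ p + ‖y - x‖ ^ p) :=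
  calc ‖x‖ ^ p ≤ (‖y‖ + ‖y - x‖) ^ p := by gcongr; exact norm_le_norm_add_norm_sub y x
    _ ≤ 2 ^ (p - 1) * (‖y‖ ^ p + ‖y - x‖ ^ p) :=
        mod_cast NNReal.rpow_add_le_mul_rpow_add_rpow ‖y‖₊ ‖y - x‖₊ hp

section Integral

open Set

variable {α F : Type*} [MeasurableSpace α] {μ : Measure α} [NormedAddCommGroup F] {f : α → F}

theorem rpow_integral_norm_le_measureReal_univ_rpow_mul [IsFiniteMeasure μ] {p : ℝ} (hp : 1 ≤ p)
    (hf : MemLp f (ENNReal.ofReal p) μ) :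
    (∫ x, ‖f x‖ ∂μ) ^ p ≤ μ.real univ ^ (p - 1) * ∫ x, ‖f x‖ ^ p ∂μ := by
  rcases eq_zero_or_neZero μ with rfl | _
  · simp [Real.zero_rpow (zero_lt_one.trans_le hp).ne']
  have hpow : Integrable (fun x => ‖f x‖ ^ p) μ := by
    simpa [ENNReal.toReal_ofReal (zero_le_one.trans hp)] using hf.integrable_norm_rpow'
  have hint : Integrable (fun x => ‖f x‖) μ := (hf.integrable (by simpa using hp)).norm
  have jensen : (⨍ x, ‖f x‖ ∂μ) ^ p ≤ ⨍ x, ‖f x‖ ^ p ∂μ :=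
    (convexOn_rpow hp).map_average_le
      (Real.continuous_rpow_const (zero_le_one.trans hp)).continuousOn isClosed_Ici
      (.of_forall fun x => norm_nonneg (f x)) hint hpow
  have hμ : 0 < μ.real univ := measureReal_univ_pos
  calc (∫ x, ‖f x‖ ∂μ) ^ p
      = μ.real univ ^ p * (⨍ x, ‖f x‖ ∂μ) ^ p := by
        rw [← Real.mul_rpow hμ.le (by rw [average_eq]; positivity), average_eq, smul_eq_mul,
          mul_inv_cancel_left₀ hμ.ne']
    _ ≤ μ.real univ ^ p * ⨍ x, ‖f x‖ ^ p ∂μ := by gcongr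
    _ = μ.real univ ^ (p - 1) * ∫ x, ‖f x‖ ^ p ∂μ := by
        rw [average_eq, smul_eq_mul, Real.rpow_sub_one hμ.ne']
        ring

theorem memLp_restrict_of_continuousOn_isCompact [TopologicalSpace α] [OpensMeasurableSpace α]
    [IsFiniteMeasureOnCompacts μ] {K : Set α} (hf : ContinuousOn f K) (hK : IsCompact K)
    (hKm : MeasurableSet K) (p : ENNReal) :
    MemLp f p (μ.restrict K) := by
  have : IsFiniteMeasure (μ.restrict K) := isFiniteMeasure_restrict.mpr hK.measure_ne_top
  obtain ⟨C, hC⟩ := hK.exists_bound_of_continuousOn hf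
  exact .of_bound (hf.aestronglyMeasurable_of_isCompact hK hKm) C
    (ae_restrict_of_forall_mem hKm hC)

end Integral

section Curve

open Set

variable {E F : Type*} [NormedAddCommGroup E] [NormedSpace ℝ E] [NormedAddCommGroup F]
  [NormedSpace ℝ F] {a b p : ℝ}

theorem norm_sub_rpow_le_mul_integral_norm_rpow_of_hasDerivAt {g g' : ℝ → F} (hab : a ≤ b)
    (hp : 1 ≤ p) (hgc : ContinuousOn g (Icc a b)) (hg : ∀ t ∈ Ioo a b, HasDerivAt g (g' t) t)
    (hg' : MemLp g' (ENNReal.ofReal p) (volume.restrict (Ioc a b))) :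
    ‖g b - g a‖ ^ p ≤ (b - a) ^ (p - 1) * ∫ t in a..b, ‖g' t‖ ^ p := by
  have hint : IntervalIntegrable (fun t => ‖g' t‖) volume a b :=
    (intervalIntegrable_iff_integrableOn_Ioc_of_le hab).mpr
      (hg'.integrable (by simpa using hp)).norm
  have displacement : ‖g b - g a‖ ≤ ∫ t in a..b, ‖g' t‖ :=
    norm_sub_le_integral_of_norm_deriv_le_of_le hab hgc
      (fun t ht => (hg t ht).differentiableAt.differentiableWithinAt)
      (.of_forall fun t ht => (congrArg norm (hg t ht).deriv).le) hint
  calc ‖g b - g a‖ ^ p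
      ≤ (∫ t in a..b, ‖g' t‖) ^ p := by gcongr
    _ ≤ (b - a) ^ (p - 1) * ∫ t in a..b, ‖g' t‖ ^ p := by
        simpa [intervalIntegral.integral_of_le hab, Real.volume_real_Ioc_of_le hab] using
          rpow_integral_norm_le_measureReal_univ_rpow_mul hp hg'

theorem pointwise_transport_estimate_general {U : Set E} {Z : E → E} {γ : ℝ → E} {u : E → F}
    (hab : a ≤ b) (hp : 1 ≤ p) (hU : IsOpen U) (hZ : ContinuousOn Z U)
    (hu : ContDiffOn ℝ 1 u U) (hγ : IsIntegralCurveOn γ (fun _ => Z) (Icc a b))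
    (hγU : MapsTo γ (Icc a b) U) :
    ‖u (γ a)‖ ^ p ≤ 2 ^ (p - 1) * (‖u (γ b)‖ ^ p +
      (b - a) ^ (p - 1) * ∫ t in a..b, ‖fderiv ℝ u (γ t) (Z (γ t))‖ ^ p) := by
  have hderiv : ∀ t ∈ Ioo a b, HasDerivAt (u ∘ γ) (fderiv ℝ u (γ t) (Z (γ t))) t := fun t ht =>
    have htI : t ∈ Icc a b := Ioo_subset_Icc_self ht
    ((hu.differentiableOn one_ne_zero).differentiableAt
      (hU.mem_nhds (hγU htI))).hasFDerivAt.comp_hasDerivAt t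
      ((hγ t htI).hasDerivAt (Icc_mem_nhds ht.1 ht.2))
  have hspeed : ContinuousOn (fun t => fderiv ℝ u (γ t) (Z (γ t))) (Icc a b) :=
    ((hu.continuousOn_fderiv_of_isOpen hU le_rfl).clm_apply hZ).comp hγ.continuousOn hγU
  have hmemLp : MemLp (fun t => fderiv ℝ u (γ t) (Z (γ t))) (ENNReal.ofReal p)
      (volume.restrict (Ioc a b)) :=
    (memLp_restrict_of_continuousOn_isCompact hspeed isCompact_Icc measurableSet_Icc _).mono_measure
      (Measure.restrict_mono_set volume Ioc_subset_Icc_self)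
  have hincrement : ‖u (γ b) - u (γ a)‖ ^ p ≤
      (b - a) ^ (p - 1) * ∫ t in a..b, ‖fderiv ℝ u (γ t) (Z (γ t))‖ ^ p :=
    norm_sub_rpow_le_mul_integral_norm_rpow_of_hasDerivAt hab hp
      (hu.continuousOn.comp hγ.continuousOn hγU) hderiv hmemLp
  grw [norm_rpow_le_two_rpow_mul_norm_rpow_add_norm_sub_rpow hp (u (γ a)) (u (γ b)), hincrement]

end Curve

/-- Pointwise transport estimate: for a `C¹` function `u` and a flow `φ` of a `C¹` vector
field `Z` on `ℝ^m`, the value of `|u|²` at `x` is controlled by its value at the endpoint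
`φ ε x` of the flow line together with the derivative of `u` along the flow line. -/
theorem pointwise_transport_estimate
    (m : ℕ) (hm : 1 ≤ m)
    (Z : (Fin m → ℝ) → (Fin m → ℝ)) (hZ : ContDiff ℝ 1 Z)
    (φ : ℝ → (Fin m → ℝ) → (Fin m → ℝ))
    (hφ0 : ∀ x, φ 0 x = x)
    (hφ : ∀ (t : ℝ) (x : Fin m → ℝ), HasDerivAt (fun s => φ s x) (Z (φ t x)) t)
    (u : (Fin m → ℝ) → ℂ) (hu : ContDiff ℝ 1 u)
    (x : Fin m → ℝ) (ε : ℝ) (hε : 0 < ε) :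
    ‖u x‖ ^ 2 ≤
      2 * ‖u (φ ε x)‖ ^ 2 +
        2 * ε * ∫ t in (0:ℝ)..ε, ‖fderiv ℝ u (φ t x) (Z (φ t x))‖ ^ 2 := by
  have hγ : IsIntegralCurve (fun t => φ t x) (fun _ => Z) := fun t => hφ t x
  simpa [hφ0, mul_add, mul_assoc, show (2 : ℝ) - 1 = 1 by norm_num] using
    pointwise_transport_estimate_general (p := 2) hε.le one_le_two isOpen_univ
      hZ.continuous.continuousOn hu.contDiffOn (hγ.isIntegralCurveOn _) (Set.mapsTo_univ _ _)
end

section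
/- Assume in addition that Z is globally Lipschitz and that |div Z(x)| ≤ C₁ for all x ∈ ℝ^m, where div Z(x) is the trace of the Fréchet derivative of Z at x. Then for every measurable set A ⊆ ℝ^m, every t ≥ 0, and every measurable u : ℝ^m → ℂ, ∫_A |u(φ(t, x))|² dx ≤ e^{C₁ t} ∫_{φ(t,·)(A)} |u(y)|² dy. (Change of variables along the flow with Jacobian controlled by the divergence bound.) -/
open MeasureTheory

/-! The derivative of a flow `φ` of a `C¹` Lipschitz field `Z` solves the variational equation
`dW/dt = DZ(φ_t(x)) W`, `W 0 = 1`. By Jacobi's formula `d(det W)/dt = tr (DZ(φ_t(x))) det W`, so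
`det Dφ_t(x) = exp (∫₀ᵗ div Z(φ_s(x)) ds)`; with `div Z ≥ -C` this Jacobian is at least
`exp (-C t)`, and the change of variables formula for the injective map `φ_t` gives the inequality.

Picard–Lindelöf solves the variational equation directly only while `K t ≤ 1/2`, where `K` is the
Lipschitz constant of `Z`; the Jacobian formula then propagates to all times through the chain rule
and `φ_(s+t) = φ_s ∘ φ_t`.
-/

open Set
open scoped NNReal ENNReal

section Determinant

variable {𝕜 E : Type*} [NontriviallyNormedField 𝕜]
  [NormedAddCommGroup E] [NormedSpace 𝕜 E] [FiniteDimensional 𝕜 E]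

lemma hasDerivAt_clm_det_one_add_smul (A : E →L[𝕜] E) :
    HasDerivAt (fun r : 𝕜 => (1 + r • A).det) (LinearMap.trace 𝕜 E (A : E →ₗ[𝕜] E)) 0 := by
  let b := Module.finBasis 𝕜 E
  let M := LinearMap.toMatrix b b (A : E →ₗ[𝕜] E)
  let P := (1 + (Polynomial.X : Polynomial 𝕜) • M.map Polynomial.C).det
  have det_eq : (fun r : 𝕜 => (1 + r • A).det) = fun r => P.eval r := by
    funext r
    have toMatrix_eq : LinearMap.toMatrix b b ((1 + r • A : E →L[𝕜] E) : E →ₗ[𝕜] E) =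
        1 + r • M := by
      rw [← LinearMap.toMatrix_one b, ← map_smul, ← map_add]
      rfl
    have eval_eq : (Polynomial.evalRingHom r).mapMatrix
        (1 + (Polynomial.X : Polynomial 𝕜) • M.map Polynomial.C) = 1 + r • M := by
      rw [map_add, map_one]
      congr 1
      ext i j
      simpa using mul_comm (M i j) r
    rw [ContinuousLinearMap.det, ← LinearMap.det_toMatrix b, toMatrix_eq,
      ← Polynomial.coe_evalRingHom, RingHom.map_det, eval_eq]
  rw [det_eq, LinearMap.trace_eq_matrix_trace 𝕜 b, ← Matrix.derivative_det_one_add_X_smul]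
  exact P.hasDerivAt 0

variable [CompleteSpace 𝕜]

lemma differentiable_clm_det : Differentiable 𝕜 (fun L : E →L[𝕜] E => L.det) := by
  let b := Module.finBasis 𝕜 E
  have det_eq : (fun L : E →L[𝕜] E => L.det) =
      fun L : E →L[𝕜] E => (LinearMap.toMatrix b b (L : E →ₗ[𝕜] E)).det :=
    funext fun L => (LinearMap.det_toMatrix b _).symm
  have entry : ∀ i j, Differentiable 𝕜
      (fun L : E →L[𝕜] E => LinearMap.toMatrix b b (L : E →ₗ[𝕜] E) i j) := fun i j => by
    simp only [LinearMap.toMatrix_apply]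
    exact ((b.coord i).toContinuousLinearMap.comp
      (ContinuousLinearMap.apply 𝕜 E (b j))).differentiable
  simp only [det_eq, Matrix.det_apply, Units.smul_def, zsmul_eq_mul]
  fun_prop

lemma hasDerivWithinAt_clm_det_of_comp {W : 𝕜 → E →L[𝕜] E} {A : E →L[𝕜] E} {s : Set 𝕜} {t : 𝕜}
    (hW : HasDerivWithinAt W (A ∘L W t) s t) :
    HasDerivWithinAt (fun r => (W r).det)
      (LinearMap.trace 𝕜 E (A : E →ₗ[𝕜] E) * (W t).det) s t := by
  have line : HasDerivAt (fun r : 𝕜 => W t + r • (A ∘L W t)) (A ∘L W t) 0 := by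
    simpa using ((hasDerivAt_id (0 : 𝕜)).smul_const (A ∘L W t)).const_add (W t)
  have det_line : (fun r : 𝕜 => (W t + r • (A ∘L W t)).det) =
      fun r => (1 + r • A).det * (W t).det := by
    funext r
    exact (congrArg LinearMap.det (by ext; simp)).trans (LinearMap.det_comp _ _)
  have hdet : HasFDerivAt (fun L : E →L[𝕜] E => L.det) _ (W t) :=
    (differentiable_clm_det (W t)).hasFDerivAt
  have fderiv_det : fderiv 𝕜 (fun L : E →L[𝕜] E => L.det) (W t) (A ∘L W t) =
      LinearMap.trace 𝕜 E (A : E →ₗ[𝕜] E) * (W t).det := by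
    have along_line := hdet.comp_hasDerivAt_of_eq (0 : 𝕜) line (by simp)
    refine along_line.unique ?_
    simp only [Function.comp_def, det_line]
    exact (hasDerivAt_clm_det_one_add_smul A).mul_const _
  rw [← fderiv_det]
  exact hdet.comp_hasDerivWithinAt t hW

variable (𝕜 E) in
/-- The trace as a continuous linear form on the endomorphisms of a finite-dimensional space, used
for the continuity and the boundedness of the divergence. -/
noncomputable def traceCLM : (E →L[𝕜] E) →L[𝕜] 𝕜 :=
  LinearMap.toContinuousLinearMap (LinearMap.trace 𝕜 E ∘ₗ ContinuousLinearMap.coeLM 𝕜)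

end Determinant

section LinearODE

theorem det_eq_exp_integral_trace {E : Type*} [NormedAddCommGroup E] [NormedSpace ℝ E]
    [FiniteDimensional ℝ E] {A W : ℝ → E →L[ℝ] E} {T : ℝ} (hA : Continuous A) (hT : 0 ≤ T)
    (hW₀ : W 0 = 1) (hW : ∀ t ∈ Icc 0 T, HasDerivWithinAt W (A t ∘L W t) (Icc 0 T) t) :
    (W T).det = Real.exp (∫ t in 0..T, LinearMap.trace ℝ E (A t : E →ₗ[ℝ] E)) := by
  let τ : ℝ → ℝ := fun t => LinearMap.trace ℝ E (A t : E →ₗ[ℝ] E)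
  let I : ℝ → ℝ := fun t => ∫ s in 0..t, τ s
  have hτ : Continuous τ := (traceCLM ℝ E).continuous.comp hA
  have hderiv : ∀ t ∈ Icc 0 T,
      HasDerivWithinAt (fun t => (W t).det * Real.exp (-I t)) 0 (Icc 0 T) t := fun t ht => by
    have hI : HasDerivAt I (τ t) t := (hτ.integral_hasStrictDerivAt 0 t).hasDerivAt
    refine ((hasDerivWithinAt_clm_det_of_comp (hW t ht)).mul
      hI.neg.exp.hasDerivWithinAt).congr_deriv ?_
    ring
  have hconst := constant_of_derivWithin_zero
    (fun t ht => (hderiv t ht).differentiableWithinAt)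
    (fun t ht => (hderiv t (Ico_subset_Icc_self ht)).derivWithin
      (uniqueDiffOn_Icc (ht.1.trans_lt ht.2) t (Ico_subset_Icc_self ht))) T ⟨hT, le_rfl⟩
  have det_one : (1 : E →L[ℝ] E).det = 1 := LinearMap.det_id
  simp only [hW₀, det_one, I, intervalIntegral.integral_same, neg_zero, Real.exp_zero,
    one_mul] at hconst
  rwa [Real.exp_neg, mul_inv_eq_one₀ (Real.exp_ne_zero _)] at hconst

variable {F : Type*} [NormedAddCommGroup F] [NormedSpace ℝ F] [CompleteSpace F]

theorem exists_linear_ode_solution {A : ℝ → F →L[ℝ] F} {K : ℝ≥0} {T : ℝ}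
    (hA : ContinuousOn A (Icc 0 T)) (hAK : ∀ t ∈ Icc 0 T, ‖A t‖ ≤ K) (hT : 0 ≤ T)
    (hKT : K * T ≤ 1 / 2) (w₀ : F) :
    ∃ w : ℝ → F, w 0 = w₀ ∧ ∀ t ∈ Icc 0 T, HasDerivWithinAt w (A t (w t)) (Icc 0 T) t := by
  -- On the ball of radius `‖w₀‖` about `w₀` the field is bounded by `2 K ‖w₀‖`, so solutions
  -- starting at `w₀` stay in that ball as long as `2 K T ≤ 1`.
  have hPL : IsPicardLindelof (fun t w => A t w) (⟨0, le_rfl, hT⟩ : Icc 0 T) w₀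
      ‖w₀‖₊ 0 (K * (2 * ‖w₀‖₊)) K :=
    { lipschitzOnWith := fun t ht =>
        ((A t).lipschitz.weaken (hAK t ht)).lipschitzOnWith
      continuousOn := fun w _ => hA.clm_apply continuousOn_const
      norm_le := fun t ht w hw => by
        have hw' : ‖w‖ ≤ 2 * ‖w₀‖ := by
          have := norm_le_norm_add_norm_sub' w w₀
          rw [mem_closedBall_iff_norm, coe_nnnorm] at hw
          linarith
        exact (A t).le_of_opNorm_le_of_le (hAK t ht) hw'
      mul_max_le := by
        simp only [sub_zero, max_eq_left hT, NNReal.coe_mul, coe_nnnorm, NNReal.coe_zero,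
          NNReal.coe_ofNat, sub_self]
        nlinarith [norm_nonneg w₀] }
  exact hPL.exists_eq_forall_mem_Icc_hasDerivWithinAt₀

end LinearODE

lemma exists_forall_norm_sub_sub_fderiv_le_of_isCompact {E F : Type*}
    [NormedAddCommGroup E] [NormedSpace ℝ E] [NormedAddCommGroup F] [NormedSpace ℝ F]
    {f : E → F} (hf : ContDiff ℝ 1 f) {S : Set E} (hS : IsCompact S) {ε : ℝ} (hε : 0 < ε) :
    ∃ δ > 0, ∀ x ∈ S, ∀ y, ‖y - x‖ < δ →
      ‖f y - f x - fderiv ℝ f x (y - x)‖ ≤ ε * ‖y - x‖ := by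
  have hunif := hS.uniformContinuousAt_of_continuousAt (fderiv ℝ f)
    (fun x _ => (hf.continuous_fderiv one_ne_zero).continuousAt) (Metric.dist_mem_uniformity hε)
  obtain ⟨δ, hδ, hδS⟩ := Metric.mem_uniformity_dist.1 hunif
  refine ⟨δ, hδ, fun x hx y hy => ?_⟩
  refine (convex_ball x δ).norm_image_sub_le_of_norm_fderiv_le'
    (fun z _ => hf.differentiable one_ne_zero z) (fun z hz => ?_)
    (Metric.mem_ball_self hδ) (mem_ball_iff_norm.2 hy)
  rw [← dist_eq_norm, dist_comm]
  exact (hδS (by rwa [dist_comm]) hx).le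

lemma gronwallBound_zero_left (K ε x : ℝ) : gronwallBound 0 K ε x = ε * gronwallBound 0 K 1 x := by
  unfold gronwallBound
  split_ifs <;> ring

/-- `φ` is a flow of the autonomous vector field `Z`, defined for all times. The group law is not
a field: for Lipschitz `Z` it follows from uniqueness of solutions. -/
structure IsGlobalFlow {E : Type*} [NormedAddCommGroup E] [NormedSpace ℝ E]
    (Z : E → E) (φ : ℝ → E → E) : Prop where
  map_zero : ∀ x, φ 0 x = x
  hasDerivAt : ∀ t x, HasDerivAt (fun s => φ s x) (Z (φ t x)) t

/-- The divergence of a vector field as the trace of its Fréchet derivative, hence independent of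
coordinates; it is `0` where `Z` is not differentiable. -/
noncomputable def vectorDivergence {E : Type*} [NormedAddCommGroup E] [NormedSpace ℝ E]
    (Z : E → E) (x : E) : ℝ :=
  LinearMap.trace ℝ E (fderiv ℝ Z x : E →ₗ[ℝ] E)

lemma vectorDivergence_le_of_lipschitzWith {E : Type*} [NormedAddCommGroup E] [NormedSpace ℝ E]
    [FiniteDimensional ℝ E] {Z : E → E} {K : ℝ≥0} (hZK : LipschitzWith K Z) (x : E) :
    vectorDivergence Z x ≤ ‖traceCLM ℝ E‖ * K :=
  (le_abs_self _).trans <|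
    (traceCLM ℝ E).le_opNorm_of_le (norm_fderiv_le_of_lipschitz ℝ hZK)

namespace IsGlobalFlow

section SpatialDerivative

variable {E : Type*} [NormedAddCommGroup E] [NormedSpace ℝ E]
  {Z : E → E} {φ : ℝ → E → E} {K : ℝ≥0}

lemma continuous_orbit (hφ : IsGlobalFlow Z φ) (x : E) : Continuous (fun t => φ t x) :=
  continuous_iff_continuousAt.2 fun t => (hφ.hasDerivAt t x).continuousAt

lemma map_add (hφ : IsGlobalFlow Z φ) (hZK : LipschitzWith K Z) (s t : ℝ) (x : E) :
    φ (s + t) x = φ s (φ t x) :=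
  congrFun (ODE_solution_unique_univ (v := fun _ => Z) (s := fun _ => univ) (t₀ := 0)
    (f := fun s => φ (s + t) x) (g := fun s => φ s (φ t x)) (fun _ => hZK.lipschitzOnWith)
    (fun s => ⟨(hφ.hasDerivAt (s + t) x).comp_add_const s t, trivial⟩)
    (fun s => ⟨hφ.hasDerivAt s _, trivial⟩) (by simp [hφ.map_zero])) s

lemma injective (hφ : IsGlobalFlow Z φ) (hZK : LipschitzWith K Z) (t : ℝ) :
    Function.Injective (φ t) :=
  Function.LeftInverse.injective (g := φ (-t)) fun x => by
    rw [← hφ.map_add hZK, neg_add_cancel, hφ.map_zero]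

lemma norm_sub_le (hφ : IsGlobalFlow Z φ) (hZK : LipschitzWith K Z) {t : ℝ} (ht : 0 ≤ t)
    (x y : E) : ‖φ t y - φ t x‖ ≤ ‖y - x‖ * Real.exp (K * t) := by
  have gronwall := dist_le_of_trajectories_ODE (v := fun _ => Z) (a := 0) (b := t)
    (δ := dist y x) (fun _ => hZK)
    (hφ.continuous_orbit y).continuousOn (fun s _ => (hφ.hasDerivAt s y).hasDerivWithinAt)
    (hφ.continuous_orbit x).continuousOn (fun s _ => (hφ.hasDerivAt s x).hasDerivWithinAt)
    (by simp only [hφ.map_zero, le_refl]) t ⟨ht, le_rfl⟩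
  simpa only [dist_eq_norm, sub_zero] using gronwall

lemma norm_sub_sub_le_gronwallBound (hφ : IsGlobalFlow Z φ) (hZK : LipschitzWith K Z)
    {W : ℝ → E →L[ℝ] E} {T ε : ℝ} {x y : E} (hT : 0 ≤ T) (hW₀ : W 0 = 1)
    (hW : ∀ t ∈ Icc 0 T, HasDerivWithinAt W (fderiv ℝ Z (φ t x) ∘L W t) (Icc 0 T) t)
    (hε : ∀ t ∈ Icc 0 T,
      ‖Z (φ t y) - Z (φ t x) - fderiv ℝ Z (φ t x) (φ t y - φ t x)‖ ≤ ε) :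
    ‖φ T y - φ T x - W T (y - x)‖ ≤ gronwallBound 0 K ε T := by
  let r : ℝ → E := fun t => φ t y - φ t x - W t (y - x)
  let r' : ℝ → E := fun t => Z (φ t y) - Z (φ t x) - fderiv ℝ Z (φ t x) (W t (y - x))
  have hr : ∀ t ∈ Icc 0 T, HasDerivWithinAt r (r' t) (Icc 0 T) t := fun t ht =>
    ((hφ.hasDerivAt t y).sub (hφ.hasDerivAt t x)).hasDerivWithinAt.sub
      (((ContinuousLinearMap.apply ℝ E (y - x)).hasFDerivAt).comp_hasDerivWithinAt t (hW t ht))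
  have r'_bound : ∀ t ∈ Ico 0 T, ‖r' t‖ ≤ K * ‖r t‖ + ε := fun t ht => by
    have split : r' t = fderiv ℝ Z (φ t x) (r t) +
        (Z (φ t y) - Z (φ t x) - fderiv ℝ Z (φ t x) (φ t y - φ t x)) := by
      simp only [r, r', map_sub]
      abel
    rw [split]
    exact norm_add_le_of_le
      ((fderiv ℝ Z (φ t x)).le_of_opNorm_le (norm_fderiv_le_of_lipschitz ℝ hZK) _)
      (hε t (Ico_subset_Icc_self ht))
  simpa only [sub_zero] using norm_le_gronwallBound_of_norm_deriv_right_le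
    (fun t ht => (hr t ht).continuousWithinAt)
    (fun t ht => (hr t (Ico_subset_Icc_self ht)).mono_of_mem_nhdsWithin
      (Icc_mem_nhdsGE_of_mem ht))
    (by simp [r, hφ.map_zero, hW₀]) r'_bound T ⟨hT, le_rfl⟩

lemma hasFDerivAt_of_variational (hφ : IsGlobalFlow Z φ) (hZ : ContDiff ℝ 1 Z)
    (hZK : LipschitzWith K Z) {W : ℝ → E →L[ℝ] E} {T : ℝ} {x : E} (hT : 0 ≤ T) (hW₀ : W 0 = 1)
    (hW : ∀ t ∈ Icc 0 T, HasDerivWithinAt W (fderiv ℝ Z (φ t x) ∘L W t) (Icc 0 T) t) :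
    HasFDerivAt (φ T) (W T) x := by
  set c := Real.exp (K * T) * gronwallBound 0 K 1 T with hc
  rw [hasFDerivAt_iff_isLittleO]
  refine Asymptotics.IsLittleO.of_bound fun η hη => ?_
  obtain ⟨ε, hε, hεη⟩ : ∃ ε > 0, ε * c ≤ η :=
    ⟨η / (|c| + 1), by positivity, by
      rw [div_mul_eq_mul_div, div_le_iff₀ (by positivity)]
      gcongr
      linarith [le_abs_self c]⟩
  obtain ⟨δ, hδ, hδZ⟩ := exists_forall_norm_sub_sub_fderiv_le_of_isCompact hZ
    (isCompact_Icc.image (hφ.continuous_orbit x) : IsCompact ((φ · x) '' Icc 0 T)) hε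
  filter_upwards [Metric.ball_mem_nhds x (ε := δ / Real.exp (K * T)) (by positivity)] with y hy
  rw [mem_ball_iff_norm, lt_div_iff₀ (Real.exp_pos _)] at hy
  have hclose : ∀ t ∈ Icc 0 T, ‖φ t y - φ t x‖ ≤ ‖y - x‖ * Real.exp (K * T) := fun t ht =>
    (hφ.norm_sub_le hZK ht.1 x y).trans (by gcongr; exact ht.2)
  calc ‖φ T y - φ T x - W T (y - x)‖
      ≤ gronwallBound 0 K (ε * (‖y - x‖ * Real.exp (K * T))) T :=
        hφ.norm_sub_sub_le_gronwallBound hZK hT hW₀ hW fun t ht =>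
          (hδZ _ (mem_image_of_mem _ ht) _ ((hclose t ht).trans_lt hy)).trans
            (by gcongr; exact hclose t ht)
    _ = ε * c * ‖y - x‖ := by rw [gronwallBound_zero_left, hc]; ring
    _ ≤ η * ‖y - x‖ := by gcongr

end SpatialDerivative

section LiouvilleFormula

variable {E : Type*} [NormedAddCommGroup E] [NormedSpace ℝ E]
  {Z : E → E} {φ : ℝ → E → E} {K : ℝ≥0} {t : ℝ} {x : E}

/-- The Liouville formula `det Dφ_t(x) = exp (∫₀ᵗ div Z (φ_s(x)) ds)` for the Jacobian of the
time-`t` map at `x`, including the differentiability of that map at `x`. -/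
def HasLiouvilleJacobian (Z : E → E) (φ : ℝ → E → E) (t : ℝ) (x : E) : Prop :=
  ∃ W : E →L[ℝ] E, HasFDerivAt (φ t) W x ∧
    W.det = Real.exp (∫ s in 0..t, vectorDivergence Z (φ s x))

lemma hasLiouvilleJacobian_zero (hφ : IsGlobalFlow Z φ) (x : E) :
    HasLiouvilleJacobian Z φ 0 x := by
  refine ⟨.id ℝ E, ?_, ?_⟩
  · rw [show φ 0 = id from funext hφ.map_zero]
    exact hasFDerivAt_id x
  · rw [intervalIntegral.integral_same, Real.exp_zero]
    exact LinearMap.det_id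

variable [FiniteDimensional ℝ E]

lemma continuous_vectorDivergence_orbit (hφ : IsGlobalFlow Z φ) (hZ : ContDiff ℝ 1 Z) (x : E) :
    Continuous (fun s => vectorDivergence Z (φ s x)) :=
  (traceCLM ℝ E).continuous.comp
    ((hZ.continuous_fderiv one_ne_zero).comp (hφ.continuous_orbit x))

lemma hasLiouvilleJacobian_add (hφ : IsGlobalFlow Z φ) (hZ : ContDiff ℝ 1 Z)
    (hZK : LipschitzWith K Z) {s t : ℝ} (hs : HasLiouvilleJacobian Z φ s (φ t x))
    (ht : HasLiouvilleJacobian Z φ t x) : HasLiouvilleJacobian Z φ (s + t) x := by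
  obtain ⟨V, hV, hVdet⟩ := hs
  obtain ⟨W, hW, hWdet⟩ := ht
  have hint : ∀ a b, IntervalIntegrable (fun r => vectorDivergence Z (φ r x)) volume a b :=
    (hφ.continuous_vectorDivergence_orbit hZ x).intervalIntegrable
  have hshift : ∫ r in 0..s, vectorDivergence Z (φ r (φ t x)) =
      ∫ r in t..(s + t), vectorDivergence Z (φ r x) := by
    simp only [← hφ.map_add hZK, intervalIntegral.integral_comp_add_right
      (fun r => vectorDivergence Z (φ r x)), zero_add]
  refine ⟨V ∘L W, ?_, ?_⟩
  · rw [show φ (s + t) = φ s ∘ φ t from funext (hφ.map_add hZK s t)]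
    exact hV.comp x hW
  · rw [← intervalIntegral.integral_add_adjacent_intervals (hint 0 t) (hint _ _), ← hshift,
      Real.exp_add, ← hVdet, ← hWdet, mul_comm]
    exact LinearMap.det_comp _ _

lemma hasLiouvilleJacobian_of_mul_le_half (hφ : IsGlobalFlow Z φ) (hZ : ContDiff ℝ 1 Z)
    (hZK : LipschitzWith K Z) (ht : 0 ≤ t) (hKt : K * t ≤ 1 / 2) (x : E) :
    HasLiouvilleJacobian Z φ t x := by
  have hA : Continuous (fun s => fderiv ℝ Z (φ s x)) :=
    (hZ.continuous_fderiv one_ne_zero).comp (hφ.continuous_orbit x)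
  obtain ⟨W, hW₀, hW⟩ := exists_linear_ode_solution (K := K)
    (A := fun s => ContinuousLinearMap.compL ℝ E E E (fderiv ℝ Z (φ s x)))
    ((ContinuousLinearMap.compL ℝ E E E).continuous.comp hA).continuousOn
    (fun s _ => ContinuousLinearMap.opNorm_le_bound _ K.2 fun V =>
      (ContinuousLinearMap.opNorm_comp_le _ V).trans
        (by gcongr; exact norm_fderiv_le_of_lipschitz ℝ hZK)) ht hKt 1
  exact ⟨W t, hφ.hasFDerivAt_of_variational hZ hZK ht hW₀ hW,
    det_eq_exp_integral_trace hA ht hW₀ hW⟩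

theorem hasLiouvilleJacobian (hφ : IsGlobalFlow Z φ) (hZ : ContDiff ℝ 1 Z)
    (hZK : LipschitzWith K Z) (ht : 0 ≤ t) (x : E) : HasLiouvilleJacobian Z φ t x := by
  obtain ⟨n, hn⟩ := exists_nat_gt (2 * (K * t))
  have hn₀ : (0 : ℝ) < n := lt_of_le_of_lt (by positivity) hn
  have short : K * (t / n) ≤ 1 / 2 := by
    rw [← mul_div_assoc, div_le_iff₀ hn₀]
    linarith
  suffices ∀ k : ℕ, HasLiouvilleJacobian Z φ (k * (t / n)) x by
    simpa only [mul_div_cancel₀ t hn₀.ne'] using this n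
  intro k
  induction k with
  | zero => simpa using hφ.hasLiouvilleJacobian_zero x
  | succ k ih =>
    rw [show ((k + 1 : ℕ) : ℝ) * (t / n) = t / n + k * (t / n) by push_cast; ring]
    exact hφ.hasLiouvilleJacobian_add hZ hZK
      (hφ.hasLiouvilleJacobian_of_mul_le_half hZ hZK (by positivity) short _) ih

end LiouvilleFormula

section ChangeOfVariables

variable {E : Type*} [NormedAddCommGroup E] [NormedSpace ℝ E] [FiniteDimensional ℝ E]
  [MeasurableSpace E] [BorelSpace E] (μ : Measure E) [μ.IsAddHaarMeasure]
  {Z : E → E} {φ : ℝ → E → E} {K : ℝ≥0} {A : Set E} {t : ℝ}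

theorem lintegral_image (hφ : IsGlobalFlow Z φ) (hZ : ContDiff ℝ 1 Z) (hZK : LipschitzWith K Z)
    (hA : MeasurableSet A) (ht : 0 ≤ t) (g : E → ℝ≥0∞) :
    ∫⁻ y in φ t '' A, g y ∂μ =
      ∫⁻ x in A, ENNReal.ofReal (Real.exp (∫ s in 0..t, vectorDivergence Z (φ s x))) *
        g (φ t x) ∂μ := by
  choose W hW hdet using hφ.hasLiouvilleJacobian hZ hZK ht
  rw [lintegral_image_eq_lintegral_abs_det_fderiv_mul μ hA
    (fun x _ => (hW x).hasFDerivWithinAt) (hφ.injective hZK t).injOn]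
  simp only [hdet, abs_of_pos (Real.exp_pos _)]

theorem exp_mul_lintegral_comp_le (hφ : IsGlobalFlow Z φ) (hZ : ContDiff ℝ 1 Z)
    (hZK : LipschitzWith K Z) {c : ℝ} (hc : ∀ x, c ≤ vectorDivergence Z x)
    (hA : MeasurableSet A) (ht : 0 ≤ t) (g : E → ℝ≥0∞) :
    ENNReal.ofReal (Real.exp (c * t)) * ∫⁻ x in A, g (φ t x) ∂μ ≤
      ∫⁻ y in φ t '' A, g y ∂μ := by
  rw [hφ.lintegral_image μ hZ hZK hA ht, ← lintegral_const_mul' _ _ ENNReal.ofReal_ne_top]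
  gcongr with x
  simpa [mul_comm] using intervalIntegral.integral_mono_on ht
    (intervalIntegrable_const (μ := volume) (c := c))
    ((hφ.continuous_vectorDivergence_orbit hZ x).intervalIntegrable 0 t) fun s _ => hc (φ s x)

theorem lintegral_image_le_exp_mul (hφ : IsGlobalFlow Z φ) (hZ : ContDiff ℝ 1 Z)
    (hZK : LipschitzWith K Z) {C : ℝ} (hC : ∀ x, vectorDivergence Z x ≤ C)
    (hA : MeasurableSet A) (ht : 0 ≤ t) (g : E → ℝ≥0∞) :
    ∫⁻ y in φ t '' A, g y ∂μ ≤
      ENNReal.ofReal (Real.exp (C * t)) * ∫⁻ x in A, g (φ t x) ∂μ := by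
  rw [hφ.lintegral_image μ hZ hZK hA ht, ← lintegral_const_mul' _ _ ENNReal.ofReal_ne_top]
  gcongr with x
  simpa [mul_comm] using intervalIntegral.integral_mono_on ht
    ((hφ.continuous_vectorDivergence_orbit hZ x).intervalIntegrable 0 t)
    (intervalIntegrable_const (μ := volume) (c := C)) fun s _ => hC (φ s x)

end ChangeOfVariables

end IsGlobalFlow

theorem flow_change_of_variables_general {E : Type*} [NormedAddCommGroup E] [NormedSpace ℝ E]
    [FiniteDimensional ℝ E] [MeasurableSpace E] [BorelSpace E] (μ : Measure E)
    [μ.IsAddHaarMeasure] {Z : E → E} {φ : ℝ → E → E} {K : ℝ≥0} {C : ℝ} (hφ : IsGlobalFlow Z φ)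
    (hZ : ContDiff ℝ 1 Z) (hZK : LipschitzWith K Z) (hdiv : ∀ x, -C ≤ vectorDivergence Z x)
    {A : Set E} (hA : MeasurableSet A) {t : ℝ} (ht : 0 ≤ t) {g : E → ℝ} (hg : Measurable g)
    (hg₀ : ∀ y, 0 ≤ g y) :
    ∫ x in A, g (φ t x) ∂μ ≤ Real.exp (C * t) * ∫ y in φ t '' A, g y ∂μ := by
  have hφt : Continuous (φ t) := continuous_iff_continuousAt.2 fun x =>
    let ⟨_, hW, _⟩ := hφ.hasLiouvilleJacobian hZ hZK ht x
    hW.continuousAt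
  rw [integral_eq_lintegral_of_nonneg_ae (.of_forall fun x => hg₀ (φ t x))
      (hg.comp hφt.measurable).aestronglyMeasurable,
    integral_eq_lintegral_of_nonneg_ae (.of_forall hg₀) hg.aestronglyMeasurable]
  by_cases htop : ∫⁻ x in A, ENNReal.ofReal (g (φ t x)) ∂μ = ∞
  · rw [htop, ENNReal.toReal_top]
    positivity
  -- A non-integrable `g` on the image would have Bochner integral `0`; the upper bound on the
  -- Jacobian rules this out when the left side is finite.
  have image_ne_top : ∫⁻ y in φ t '' A, ENNReal.ofReal (g y) ∂μ ≠ ∞ :=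
    ne_top_of_le_ne_top (ENNReal.mul_ne_top ENNReal.ofReal_ne_top htop) <|
      hφ.lintegral_image_le_exp_mul μ hZ hZK (vectorDivergence_le_of_lipschitzWith hZK) hA ht _
  have lower := ENNReal.toReal_mono image_ne_top <|
    hφ.exp_mul_lintegral_comp_le μ hZ hZK hdiv hA ht fun y => ENNReal.ofReal (g y)
  rwa [ENNReal.toReal_mul, ENNReal.toReal_ofReal (Real.exp_pos _).le, neg_mul, Real.exp_neg,
    inv_mul_le_iff₀ (Real.exp_pos _)] at lower

/-- Change of variables along the flow: if `Z` is Lipschitz and `C¹` with `|div Z| ≤ C₁`,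
then for every measurable set `A`, every `t ≥ 0` and every measurable `u : ℝ^m → ℂ`,
`∫_A |u (φ t x)|² dx ≤ e^{C₁ t} ∫_{φ t '' A} |u y|² dy`. -/
theorem flow_change_of_variables
    (m : ℕ) (hm : 1 ≤ m)
    (Z : (Fin m → ℝ) → (Fin m → ℝ)) (hZ : ContDiff ℝ 1 Z)
    (φ : ℝ → (Fin m → ℝ) → (Fin m → ℝ))
    (hφ0 : ∀ x, φ 0 x = x)
    (hφ : ∀ (t : ℝ) (x : Fin m → ℝ), HasDerivAt (fun s => φ s x) (Z (φ t x)) t)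
    (hlip : ∃ K : NNReal, LipschitzWith K Z)
    (C₁ : ℝ)
    (hdiv : ∀ x, |LinearMap.trace ℝ (Fin m → ℝ) (fderiv ℝ Z x : (Fin m → ℝ) →ₗ[ℝ] (Fin m → ℝ))| ≤ C₁) :
    ∀ (A : Set (Fin m → ℝ)), MeasurableSet A → ∀ t : ℝ, 0 ≤ t →
      ∀ (u : (Fin m → ℝ) → ℂ), Measurable u →
        ∫ x in A, ‖u (φ t x)‖ ^ 2 ≤
          Real.exp (C₁ * t) * ∫ y in φ t '' A, ‖u y‖ ^ 2 := by
  intro A hA t ht u hu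
  obtain ⟨K, hZK⟩ := hlip
  exact flow_change_of_variables_general volume ⟨hφ0, hφ⟩ hZ hZK
    (fun x => neg_le_of_abs_le (hdiv x)) hA ht (hu.norm.pow_const 2) fun y => sq_nonneg ‖u y‖
end
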